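/- The number of spanning trees of the connected Cayley graph D_n = Cay(D_n, b^{±β_1},...,b^{±β_s}, ab^{γ_1},...,ab^{γ_t}) equals τ(n) = (t/n) ∏_{j=1}^{n−1} P(ε_n^j), where ε_n = exp(2πi/n) and P(z) = A(z)A(z^{-1}) − B(z)B(z^{-1}). -/

import Mathlib

open DihedralGroup Complex

/-- The Cayley graph of a group with symmetric connection set `S`. -/
def cayleyGraph {G : Type*} [Group G] (S : Set G) : SimpleGraph G :=
  SimpleGraph.fromRel (fun x y => x⁻¹ * y ∈ S)

/-- The generating set `{b^{±β_1},…,b^{±β_s}, a b^{γ_1},…, a b^{γ_t}}` of `D_n`,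
where `b = r 1` and `a = sr 0`. -/
def dihedralGenSet (n : ℕ) {s t : ℕ} (β : Fin s → ℕ) (γ : Fin t → ℕ) :
    Set (DihedralGroup n) :=
  (Set.range fun i => r (β i : ZMod n)) ∪ (Set.range fun i => r (-(β i : ZMod n))) ∪
    (Set.range fun j => sr (γ j : ZMod n))

/-- The number of spanning trees of a graph. -/
noncomputable def numSpanningTrees {V : Type*} (G : SimpleGraph V) : ℕ :=
  Nat.card {H : G.Subgraph // H.IsSpanning ∧ H.coe.IsTree}

/-!
Replace the row of a root in the Laplacian `L` by a basis vector. Multilinearity in the other rows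
expands the determinant into a sum over maps sending each vertex to a neighbour. The summand is `1`
if the map is the parent map of a spanning tree and `0` otherwise, so the determinant counts
spanning trees, whence `det (L + J) = |V| ^ 2 * τ` for the all-ones matrix `J`.

For a Cayley graph, `L + J` is a group matrix. Over the dihedral group it consists of two circulant
and two Hankel blocks, and the Fourier matrices of a primitive character of `ℤ/n` and of its
inverse reduce it to `2 × 2` blocks with determinants `P (ε ^ k)`, `k ≠ 0`. Adding `J` only affects
the block `k = 0`, which becomes `(t + n) ^ 2 - (n - t) ^ 2 = 4 * n * t`, and division by
`(2 * n) ^ 2` leaves the factor `t / n`.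
-/

open scoped Matrix

section LinearAlgebra

variable {V R : Type*} [Fintype V] [CommRing R]

theorem indicator_range_vecMul {ι n : Type*} [Fintype ι] {u : ι → V}
    (hu : Function.Injective u) (M : Matrix V n R) :
    (Set.range u).indicator 1 ᵥ* M = fun k => ∑ i, M (u i) k := by
  ext k
  refine (Fintype.sum_of_injective u hu _ _ (fun j hj => ?_) fun i => ?_).symm
  · simp [hj]
  · simp

variable [DecidableEq V]

theorem det_eq_prod_diag_of_depth {A : Matrix V V R} (d : V → ℕ)
    (hA : ∀ i j, i ≠ j → d i ≤ d j → A i j = 0) : A.det = ∏ i, A i i := by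
  have htri : A.BlockTriangular (fun i => OrderDual.toDual (d i)) := fun i j hij =>
    hA i j (by rintro rfl; exact hij.false) (OrderDual.toDual_lt_toDual.1 hij).le
  have hblock (a : ℕᵒᵈ) : A.toSquareBlock (fun i => OrderDual.toDual (d i)) a =
      Matrix.diagonal fun i => A i.1 i.1 := by
    ext i j
    rcases eq_or_ne i j with rfl | hij
    · simp [Matrix.toSquareBlock_def]
    · rw [Matrix.diagonal_apply_ne _ hij]
      exact hA i j (Subtype.coe_ne_coe.2 hij) (OrderDual.toDual_le_toDual.1 (j.2.trans i.2.symm).le)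
  rw [htri.det, ← Finset.prod_fiberwise_of_maps_to
    fun i _ => Finset.mem_image_of_mem (fun i => OrderDual.toDual (d i)) (Finset.mem_univ i)]
  refine Finset.prod_congr rfl fun a _ => ?_
  rw [hblock, Matrix.det_diagonal]
  exact (Finset.prod_subtype _ (by simp) fun i => A i i).symm

theorem det_eq_zero_of_mulVec_eq_zero {A : Matrix V V R} {x : V → R} (hA : A *ᵥ x = 0) {v : V}
    (hv : x v = 1) : A.det = 0 := by
  have h : A.det • x = 0 := by
    rw [← Matrix.one_mulVec x, ← Matrix.smul_mulVec, ← Matrix.adjugate_mul,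
      ← Matrix.mulVec_mulVec, hA, Matrix.mulVec_zero]
  simpa [hv] using congrFun h v

theorem det_one_add_vecMulVec (x y : V → R) : (1 + Matrix.vecMulVec x y).det = 1 + y ⬝ᵥ x := by
  rw [Matrix.vecMulVec_eq Unit, Matrix.det_one_add_replicateCol_mul_replicateRow]

-- Left multiplication turns `e eᵀ` into `1 eᵀ`, right multiplication turns `1 eᵀ` into `1 1ᵀ`,
-- and `L` is unchanged because its rows and columns sum to zero.
theorem add_vecMulVec_one_one_eq_mul_mul {L : Matrix V V R} (hrow : L *ᵥ 1 = 0)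
    (hcol : 1 ᵥ* L = 0) {e : V → R} (he : e ⬝ᵥ 1 = 1) :
    L + Matrix.vecMulVec 1 1 = (1 + Matrix.vecMulVec (1 - e) 1) * (L + Matrix.vecMulVec e e) *
      (1 + Matrix.vecMulVec 1 (1 - e)) := by
  have hleft : (1 + Matrix.vecMulVec (1 - e) 1) * (L + Matrix.vecMulVec e e) =
      L + Matrix.vecMulVec 1 e := by
    rw [add_mul, one_mul, mul_add, Matrix.vecMulVec_mul, hcol, Matrix.vecMulVec_mul_vecMulVec,
      dotProduct_comm, he, Matrix.vecMulVec_zero, zero_add, one_smul, add_assoc,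
      ← Matrix.add_vecMulVec, add_sub_cancel]
  have hright : (L + Matrix.vecMulVec 1 e) * (1 + Matrix.vecMulVec 1 (1 - e)) =
      L + Matrix.vecMulVec 1 1 := by
    rw [mul_add, mul_one, add_mul, Matrix.mul_vecMulVec, hrow, Matrix.vecMulVec_mul_vecMulVec, he,
      Matrix.zero_vecMulVec, zero_add, one_smul, add_assoc, ← Matrix.vecMulVec_add, add_sub_cancel]
  rw [hleft, hright]

theorem det_add_vecMulVec_single_single {L : Matrix V V R} (hdet : L.det = 0) (v : V) :
    (L + Matrix.vecMulVec (Pi.single v 1) (Pi.single v 1)).det =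
      (L.updateRow v (Pi.single v 1)).det := by
  have h : L + Matrix.vecMulVec (Pi.single v 1) (Pi.single v 1) =
      L.updateRow v (L v + Pi.single v 1) := by
    ext i j
    rcases eq_or_ne i v with rfl | hi <;> simp [Matrix.vecMulVec_apply, *]
  rw [h, Matrix.det_updateRow_add, Matrix.updateRow_eq_self, hdet, zero_add]

theorem det_add_vecMulVec_one_one {L : Matrix V V R} (hrow : L *ᵥ 1 = 0) (hcol : 1 ᵥ* L = 0)
    (v : V) :
    (L + Matrix.vecMulVec 1 1).det =
      (Fintype.card V : R) ^ 2 * (L.updateRow v (Pi.single v 1)).det := by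
  have hdet : L.det = 0 := det_eq_zero_of_mulVec_eq_zero hrow (v := v) rfl
  rw [add_vecMulVec_one_one_eq_mul_mul hrow hcol (single_one_dotProduct v 1), Matrix.det_mul,
    Matrix.det_mul, det_one_add_vecMulVec, det_one_add_vecMulVec,
    det_add_vecMulVec_single_single hdet]
  simp only [dotProduct_sub, sub_dotProduct, one_dotProduct_one, dotProduct_single_one,
    single_one_dotProduct, Pi.one_apply, add_sub_cancel]
  ring

theorem det_fromBlocks_diagonal (a b c d : V → R) :
    (Matrix.fromBlocks (Matrix.diagonal a) (Matrix.diagonal b) (Matrix.diagonal c)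
      (Matrix.diagonal d)).det = ∏ k, (a k * d k - b k * c k) := by
  let e : Fin 2 × V ≃ V ⊕ V :=
    (finTwoEquiv.prodCongr (Equiv.refl V)).trans (Equiv.boolProdEquivSum V)
  have h : (Matrix.fromBlocks (Matrix.diagonal a) (Matrix.diagonal b) (Matrix.diagonal c)
      (Matrix.diagonal d)).submatrix e e =
      Matrix.blockDiagonal fun k => !![a k, b k; c k, d k] := by
    ext ⟨i, k⟩ ⟨j, l⟩
    fin_cases i <;> fin_cases j <;>
      simp [e, Matrix.blockDiagonal_apply, Matrix.diagonal_apply, finTwoEquiv,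
        Equiv.boolProdEquivSum]
  rw [← Matrix.det_submatrix_equiv_self e, h, Matrix.det_blockDiagonal]
  simp only [Matrix.det_fin_two_of]

end LinearAlgebra

section MatrixTree

variable {V : Type*} {root : V} {f g : V → V} {G : SimpleGraph V}

/-- `f` is the parent function of a tree on `V` rooted at `root`: iterating `f` leads every vertex
to `root`, which is by convention its own parent. -/
def IsParentMap (root : V) (f : V → V) : Prop :=
  f root = root ∧ ∀ v, ∃ k : ℕ, f^[k] v = root

/-- The graph joining every vertex `v` to `f v`; fixed points of `f` give no edge. -/
def parentGraph (f : V → V) : SimpleGraph V :=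
  SimpleGraph.fromRel fun x y => f x = y

theorem parentGraph_le_iff : parentGraph f ≤ G ↔ ∀ v, f v ≠ v → G.Adj v (f v) := by
  refine ⟨fun h v hv => h (by simp [parentGraph, hv.symm]), fun h x y hxy => ?_⟩
  rcases hxy with ⟨hne, rfl | rfl⟩
  · exact h x hne.symm
  · exact (h y hne).symm

theorem IsParentMap.of_depth (hroot : f root = root) (d : V → ℕ)
    (hd : ∀ v, v ≠ root → d (f v) < d v) : IsParentMap root f := by
  refine ⟨hroot, fun v => ?_⟩
  induction hm : d v using Nat.strong_induction_on generalizing v with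
  | _ m ih =>
    by_cases hv : v = root
    · exact ⟨0, hv⟩
    · obtain ⟨k, hk⟩ := ih (d (f v)) (hm ▸ hd v hv) (f v) rfl
      exact ⟨k + 1, hk⟩

namespace IsParentMap

theorem exists_depth (hf : IsParentMap root f) :
    ∃ d : V → ℕ, ∀ v, v ≠ root → d (f v) < d v := by
  classical
  refine ⟨fun v => Nat.find (hf.2 v), fun v hv => ?_⟩
  have hspec := Nat.find_spec (hf.2 v)
  beta_reduce
  generalize Nat.find (hf.2 v) = k at hspec ⊢
  cases k with
  | zero => exact absurd hspec hv
  | succ k => exact Nat.lt_succ_of_le (Nat.find_min' (hf.2 (f v)) hspec)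

theorem apply_eq_self_iff (hf : IsParentMap root f) {v : V} : f v = v ↔ v = root := by
  obtain ⟨d, hd⟩ := hf.exists_depth
  refine ⟨fun hv => ?_, by rintro rfl; exact hf.1⟩
  by_contra hne
  exact (hv ▸ hd v hne).false

theorem apply_apply_ne_self (hf : IsParentMap root f) {v : V} (hv : v ≠ root) : f (f v) ≠ v := by
  intro hvv
  obtain ⟨d, hd⟩ := hf.exists_depth
  have hfv : f v ≠ root := fun h => hv (by rw [← hvv, h, hf.1])
  exact ((hd _ hfv).trans (hd v hv)).ne (congrArg d hvv)

theorem induction (hf : IsParentMap root f) {p : V → Prop} (base : p root)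
    (step : ∀ v, v ≠ root → p (f v) → p v) (v : V) : p v := by
  obtain ⟨k, hk⟩ := hf.2 v
  induction k generalizing v with
  | zero => exact Eq.subst (motive := p) hk.symm base
  | succ k ih =>
    by_cases hv : v = root
    · exact hv ▸ base
    · exact step v hv (ih (f v) hk)

theorem parentGraph_adj (hf : IsParentMap root f) {v : V} (hv : v ≠ root) :
    (parentGraph f).Adj v (f v) :=
  parentGraph_le_iff.1 le_rfl v (hf.apply_eq_self_iff.not.2 hv)

theorem parentGraph_connected (hf : IsParentMap root f) : (parentGraph f).Connected := by
  have hreach : ∀ v, (parentGraph f).Reachable v root :=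
    hf.induction .rfl fun v hv ih => (hf.parentGraph_adj hv).reachable.trans ih
  exact { preconnected := fun u v => (hreach u).trans (hreach v).symm, nonempty := ⟨root⟩ }

theorem edgeSet_parentGraph_subset (hf : IsParentMap root f) :
    (parentGraph f).edgeSet ⊆ (fun v => s(v, f v)) '' {root}ᶜ := by
  refine Sym2.ind fun x y => ?_
  simp only [SimpleGraph.mem_edgeSet, parentGraph, SimpleGraph.fromRel_adj]
  rintro ⟨hne, rfl | rfl⟩
  · exact ⟨x, hf.apply_eq_self_iff.not.1 hne.symm, rfl⟩
  · exact ⟨y, hf.apply_eq_self_iff.not.1 hne, Sym2.eq_swap⟩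

theorem parentGraph_isTree [Finite V] (hf : IsParentMap root f) : (parentGraph f).IsTree := by
  have hconn := hf.parentGraph_connected
  refine SimpleGraph.isTree_iff_connected_and_card.2
    ⟨hconn, le_antisymm ?_ hconn.card_vert_le_card_edgeSet_add_one⟩
  calc Nat.card (parentGraph f).edgeSet + 1
      ≤ ({root}ᶜ : Set V).ncard + 1 := Nat.add_le_add_right
        ((Set.ncard_le_ncard hf.edgeSet_parentGraph_subset).trans Set.ncard_image_le) 1
    _ = Nat.card V := by rw [← Set.ncard_add_ncard_compl {root}, Set.ncard_singleton, add_comm]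

theorem eq_of_parentGraph_eq (hf : IsParentMap root f) (hg : IsParentMap root g)
    (hfg : parentGraph f = parentGraph g) : f = g := by
  refine funext (hg.induction (hf.1.trans hg.1.symm) fun v hv ih => ?_)
  rcases (hfg ▸ hg.parentGraph_adj hv : (parentGraph f).Adj v (g v)).2 with h | h
  · exact h
  · exact absurd (ih.symm.trans h) (hg.apply_apply_ne_self hv)

end IsParentMap

theorem exists_isParentMap_parentGraph_eq (root : V) {T : SimpleGraph V} [Finite V]
    (hT : T.IsTree) : ∃ f : V → V, IsParentMap root f ∧ parentGraph f = T := by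
  have hstep (v : V) : ∃ w, (v = root → w = root) ∧
      (v ≠ root → T.Adj v w ∧ T.dist w root < T.dist v root) := by
    obtain ⟨p, hp⟩ := hT.connected.exists_walk_length_eq_dist v root
    cases p with
    | nil => exact ⟨_, id, fun h => absurd rfl h⟩
    | cons hadj q =>
      refine ⟨_, ?_, fun _ => ⟨hadj, ?_⟩⟩
      · rintro rfl
        simp at hp
      · rw [← hp, SimpleGraph.Walk.length_cons]
        exact Nat.lt_succ_of_le (SimpleGraph.dist_le q)
  choose f hroot hf using hstep
  have hparent : IsParentMap root f :=
    .of_depth (hroot root rfl) (T.dist · root) fun v hv => (hf v hv).2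
  have hle : parentGraph f ≤ T :=
    parentGraph_le_iff.2 fun v hv => (hf v (hparent.apply_eq_self_iff.not.1 hv)).1
  exact ⟨f, hparent, hle.antisymm
    ((SimpleGraph.isTree_iff_minimal_connected.1 hT).2 hparent.parentGraph_connected hle)⟩

theorem numSpanningTrees_eq_card_isTree (G : SimpleGraph V) :
    numSpanningTrees G = Nat.card {T : SimpleGraph V // T ≤ G ∧ T.IsTree} :=
  Nat.card_congr
    { toFun H := ⟨H.1.spanningCoe, H.1.spanningCoe_le,
        (H.1.spanningCoeEquivCoeOfSpanning H.2.1).isTree_iff.2 H.2.2⟩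
      invFun T := ⟨SimpleGraph.toSubgraph T.1 T.2.1, SimpleGraph.toSubgraph.isSpanning T.1 T.2.1,
        (SimpleGraph.Subgraph.spanningCoeEquivCoeOfSpanning _
          (SimpleGraph.toSubgraph.isSpanning T.1 T.2.1)).isTree_iff.1 T.2.2⟩
      left_inv H := Subtype.ext <|
        SimpleGraph.Subgraph.ext (SimpleGraph.Subgraph.isSpanning_iff.1 H.2.1).symm rfl
      right_inv _ := rfl }

theorem numSpanningTrees_eq_card_isParentMap [Finite V] (G : SimpleGraph V) (root : V) :
    numSpanningTrees G = Nat.card {f : V → V // IsParentMap root f ∧ parentGraph f ≤ G} := by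
  rw [numSpanningTrees_eq_card_isTree]
  refine (Nat.card_congr (Equiv.ofBijective
    (fun f => ⟨parentGraph f.1, f.2.2, f.2.1.parentGraph_isTree⟩) ⟨?_, ?_⟩)).symm
  · intro f g hfg
    exact Subtype.ext (f.2.1.eq_of_parentGraph_eq g.2.1 (congrArg Subtype.val hfg))
  · rintro ⟨T, hTG, hT⟩
    obtain ⟨f, hf, rfl⟩ := exists_isParentMap_parentGraph_eq root hT
    exact ⟨⟨f, hf, hTG⟩, rfl⟩

variable {R : Type*} [CommRing R] [DecidableEq V]

/-- The Laplacian of the functional graph of `f`, with the row of `root` replaced by a standard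
basis vector. -/
def parentMatrix (R : Type*) [CommRing R] (root : V) (f : V → V) : Matrix V V R :=
  fun v => if v = root then Pi.single root 1 else Pi.single v 1 - Pi.single (f v) 1

variable [Fintype V]

theorem IsParentMap.det_parentMatrix (hf : IsParentMap root f) :
    (parentMatrix R root f).det = 1 := by
  obtain ⟨d, hd⟩ := hf.exists_depth
  rw [det_eq_prod_diag_of_depth d]
  · refine Finset.prod_eq_one fun v _ => ?_
    by_cases hv : v = root
    · simp [parentMatrix, hv]
    · simp [parentMatrix, hv, Ne.symm (hf.apply_eq_self_iff.not.2 hv)]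
  · intro i j hij hdij
    by_cases hi : i = root
    · subst hi
      simp [parentMatrix, hij.symm]
    · have hj : j ≠ f i := by
        rintro rfl
        exact (hd i hi).not_ge hdij
      simp [parentMatrix, hi, hij.symm, hj]

-- The indicator of the vertices that never reach `root` is a null vector.
theorem det_parentMatrix_of_not_isParentMap (hroot : f root = root) (hf : ¬ IsParentMap root f) :
    (parentMatrix R root f).det = 0 := by
  classical
  obtain ⟨w, hw⟩ : ∃ w, ¬ ∃ k : ℕ, f^[k] w = root := by
    simpa only [IsParentMap, hroot, true_and, not_forall] using hf
  have hinv (v : V) : (∃ k : ℕ, f^[k] (f v) = root) ↔ ∃ k : ℕ, f^[k] v = root := by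
    constructor
    · rintro ⟨k, hk⟩
      exact ⟨k + 1, hk⟩
    · rintro ⟨k, hk⟩
      exact ⟨k, by rw [← Function.iterate_succ_apply, Function.iterate_succ_apply', hk, hroot]⟩
  refine det_eq_zero_of_mulVec_eq_zero
    (x := fun v => if ∃ k : ℕ, f^[k] v = root then 0 else 1) (funext fun v => ?_) (if_neg hw)
  by_cases hv : v = root
  · have hreach : ∃ k : ℕ, f^[k] root = root := ⟨0, rfl⟩
    simp [Matrix.mulVec, parentMatrix, hv, hreach]
  · simp only [Matrix.mulVec, parentMatrix, hv, if_false, sub_dotProduct, single_dotProduct,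
      one_mul, hinv, sub_self, Pi.zero_apply]

theorem lapMatrix_row (G : SimpleGraph V) [DecidableRel G.Adj] (v : V) :
    G.lapMatrix R v = ∑ u ∈ G.neighborFinset v, (Pi.single v 1 - Pi.single u 1) := by
  ext w
  simp only [Finset.sum_apply, Pi.sub_apply, Finset.sum_sub_distrib, Pi.single_apply,
    Finset.sum_const, SimpleGraph.card_neighborFinset_eq_degree, Finset.sum_ite_eq]
  simp [SimpleGraph.lapMatrix, SimpleGraph.degMatrix, Matrix.diagonal_apply, eq_comm]

/-- The maps that fix `root` and send every other vertex to one of its neighbours in `G`. -/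
def neighborMaps (G : SimpleGraph V) [DecidableRel G.Adj] (root : V) : Finset (V → V) :=
  Fintype.piFinset fun v => if v = root then {root} else G.neighborFinset v

theorem mem_neighborMaps [DecidableRel G.Adj] :
    f ∈ neighborMaps G root ↔ f root = root ∧ ∀ v, v ≠ root → G.Adj v (f v) := by
  rw [neighborMaps, Fintype.mem_piFinset]
  refine ⟨fun h => ⟨by simpa using h root, fun v hv => by simpa [hv] using h v⟩, fun h v => ?_⟩
  by_cases hv : v = root
  · simp [hv, h.1]
  · simpa [hv] using h.2 v hv

theorem IsParentMap.mem_neighborMaps_iff [DecidableRel G.Adj] (hf : IsParentMap root f) :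
    f ∈ neighborMaps G root ↔ parentGraph f ≤ G := by
  simp only [mem_neighborMaps, hf.1, true_and, parentGraph_le_iff, ne_eq, hf.apply_eq_self_iff]

theorem det_updateRow_lapMatrix_eq_sum (G : SimpleGraph V) [DecidableRel G.Adj] (root : V) :
    ((G.lapMatrix R).updateRow root (Pi.single root 1)).det =
      ∑ f ∈ neighborMaps G root, (parentMatrix R root f).det := by
  let row (v u : V) : V → R := if v = root then Pi.single root 1 else Pi.single v 1 - Pi.single u 1
  have hrow : (G.lapMatrix R).updateRow root (Pi.single root 1) =
      fun v => ∑ u ∈ if v = root then {root} else G.neighborFinset v, row v u := by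
    funext v
    rcases eq_or_ne v root with rfl | hv
    · simp [row]
    · simp only [row, hv, if_false, ← lapMatrix_row]
      exact Function.update_of_ne hv _ _
  rw [hrow]
  exact Matrix.detRowAlternating.toMultilinearMap.map_sum_finset row _

theorem det_updateRow_lapMatrix (G : SimpleGraph V) [DecidableRel G.Adj] (root : V) :
    ((G.lapMatrix R).updateRow root (Pi.single root 1)).det = numSpanningTrees G := by
  classical
  have hdet (f) (hf : f ∈ neighborMaps G root) :
      (parentMatrix R root f).det = if IsParentMap root f then 1 else 0 := by
    split_ifs with h
    · exact h.det_parentMatrix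
    · exact det_parentMatrix_of_not_isParentMap (mem_neighborMaps.1 hf).1 h
  rw [det_updateRow_lapMatrix_eq_sum, Finset.sum_congr rfl hdet, Finset.sum_boole,
    numSpanningTrees_eq_card_isParentMap G root]
  refine congrArg _ (Nat.subtype_card _ fun f => ?_).symm
  rw [Finset.mem_filter, and_comm]
  exact and_congr_right fun hf => hf.mem_neighborMaps_iff

theorem det_lapMatrix_add_vecMulVec_one_one [Nonempty V] (G : SimpleGraph V)
    [DecidableRel G.Adj] :
    (G.lapMatrix R + Matrix.vecMulVec 1 1).det =
      (Fintype.card V : R) ^ 2 * numSpanningTrees G := by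
  have hrow : G.lapMatrix R *ᵥ 1 = 0 := G.lapMatrix_mulVec_const_eq_zero
  have hcol : 1 ᵥ* G.lapMatrix R = 0 := by
    rw [← Matrix.mulVec_transpose, (G.isSymm_lapMatrix R).eq, hrow]
  rw [det_add_vecMulVec_one_one hrow hcol (Classical.arbitrary V), det_updateRow_lapMatrix]

end MatrixTree

section Cayley

variable {G : Type*} [Group G] {S : Set G}

theorem cayleyGraph_adj (hinv : ∀ x ∈ S, x⁻¹ ∈ S) (hone : 1 ∉ S) {x y : G} :
    (cayleyGraph S).Adj x y ↔ x⁻¹ * y ∈ S := by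
  rw [cayleyGraph, SimpleGraph.fromRel_adj]
  constructor
  · rintro ⟨-, h | h⟩
    · exact h
    · simpa using hinv _ h
  · refine fun h => ⟨?_, Or.inl h⟩
    rintro rfl
    exact hone (by simpa using h)

theorem closure_eq_top_of_cayleyGraph_connected (hconn : (cayleyGraph S).Connected) :
    Subgroup.closure S = ⊤ := by
  have hstep {x y : G} (h : (cayleyGraph S).Adj x y) : x⁻¹ * y ∈ Subgroup.closure S := by
    rcases h.2 with h | h
    · exact Subgroup.subset_closure h
    · simpa using inv_mem (Subgroup.subset_closure h)
  have hwalk {x y : G} (w : (cayleyGraph S).Walk x y) : x⁻¹ * y ∈ Subgroup.closure S := by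
    induction w with
    | nil => simp
    | cons h _ ih => simpa [mul_assoc] using mul_mem (hstep h) ih
  refine (Subgroup.eq_top_iff' _).2 fun x => ?_
  simpa using hwalk (hconn.preconnected 1 x).some

variable [DecidableEq G] {R : Type*} [CommRing R]

/-- The function `φ` on `G` for which `(x, y) ↦ φ (x⁻¹ * y)` is the Laplacian matrix of the Cayley
graph of `S` plus the all-ones matrix. -/
noncomputable def laplacianSymbol (R : Type*) [CommRing R] (S : Set G) : G → R :=
  Pi.single 1 (S.ncard : R) - S.indicator 1 + 1

variable [Fintype G]

theorem lapMatrix_cayleyGraph_add_vecMulVec_one_one [DecidableRel (cayleyGraph S).Adj]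
    (hinv : ∀ x ∈ S, x⁻¹ ∈ S) (hone : 1 ∉ S) :
    (cayleyGraph S).lapMatrix R + Matrix.vecMulVec 1 1 =
      Matrix.of fun x y => laplacianSymbol R S (x⁻¹ * y) := by
  classical
  have hdeg (x : G) : (cayleyGraph S).degree x = S.ncard := by
    have hnbr : (cayleyGraph S).neighborSet x = (x * ·) '' S := by
      ext y
      simp [cayleyGraph_adj hinv hone]
    rw [← SimpleGraph.card_neighborSet_eq_degree, ← Nat.card_eq_fintype_card,
      Nat.card_coe_set_eq, hnbr, Set.ncard_image_of_injective _ (mul_right_injective x)]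
  ext x y
  simp [SimpleGraph.lapMatrix, SimpleGraph.degMatrix, laplacianSymbol, Matrix.diagonal_apply,
    Pi.single_apply, Set.indicator_apply, cayleyGraph_adj hinv hone, hdeg, inv_mul_eq_one]

theorem det_laplacianSymbol (hinv : ∀ x ∈ S, x⁻¹ ∈ S) (hone : 1 ∉ S) :
    (Matrix.of fun x y => laplacianSymbol R S (x⁻¹ * y)).det =
      (Fintype.card G : R) ^ 2 * numSpanningTrees (cayleyGraph S) := by
  classical
  rw [← lapMatrix_cayleyGraph_add_vecMulVec_one_one hinv hone, det_lapMatrix_add_vecMulVec_one_one]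

end Cayley

section Fourier

variable {Z K : Type*} [CommRing Z] [CommRing K]

theorem isPrimitive_inv {ψ : AddChar Z K} (hψ : ψ.IsPrimitive) : ψ⁻¹.IsPrimitive := by
  intro a ha h
  refine hψ ha (inv_eq_one.1 ?_)
  rw [← h]
  ext k
  simp [AddChar.inv_apply, AddChar.mulShift_apply]

/-- The matrix of the discrete Fourier transform on `Z` with respect to the additive character `ψ`;
the transform of `u` is `u ᵥ* fourierMatrix ψ`. -/
def fourierMatrix (ψ : AddChar Z K) : Matrix Z Z K :=
  Matrix.of fun j k => ψ (j * k)

theorem fourierMatrix_apply (ψ : AddChar Z K) (j k : Z) : fourierMatrix ψ j k = ψ (j * k) := rfl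

variable [Fintype Z] [DecidableEq Z]

theorem transpose_circulant_mul_fourierMatrix (ψ : AddChar Z K) (c : Z → K) :
    (Matrix.circulant c)ᵀ * fourierMatrix ψ =
      fourierMatrix ψ * Matrix.diagonal (c ᵥ* fourierMatrix ψ) := by
  ext i k
  rw [Matrix.mul_diagonal, Matrix.mul_apply, Matrix.vecMul, dotProduct, Finset.mul_sum,
    ← Equiv.sum_comp (Equiv.addRight i)]
  refine Finset.sum_congr rfl fun j _ => ?_
  simp only [fourierMatrix_apply, Matrix.transpose_apply, Matrix.circulant_apply,
    Equiv.coe_addRight, add_sub_cancel_right, add_mul, AddChar.map_add_eq_mul]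
  ring

theorem hankel_mul_fourierMatrix (ψ : AddChar Z K) (h : Z → K) :
    (Matrix.of fun i j => h (i + j)) * fourierMatrix ψ =
      fourierMatrix ψ⁻¹ * Matrix.diagonal (h ᵥ* fourierMatrix ψ) := by
  ext i k
  rw [Matrix.mul_diagonal, Matrix.mul_apply, Matrix.vecMul, dotProduct, Finset.mul_sum,
    ← Equiv.sum_comp (Equiv.subRight i)]
  refine Finset.sum_congr rfl fun j _ => ?_
  simp only [fourierMatrix_apply, Matrix.of_apply, Equiv.subRight_apply, add_sub_cancel]
  simp only [sub_eq_add_neg, add_mul, neg_mul, AddChar.map_add_eq_mul, AddChar.inv_apply]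
  ring

variable [IsDomain K] {ψ : AddChar Z K}

theorem one_vecMul_fourierMatrix (hψ : ψ.IsPrimitive) :
    1 ᵥ* fourierMatrix ψ = Pi.single 0 (Fintype.card Z : K) := by
  ext k
  simp [Matrix.vecMul, dotProduct, fourierMatrix_apply, AddChar.sum_mulShift k hψ, Pi.single_apply]

theorem fourierMatrix_mul_fourierMatrix_inv (hψ : ψ.IsPrimitive) :
    fourierMatrix ψ * fourierMatrix ψ⁻¹ = (Fintype.card Z : K) • (1 : Matrix Z Z K) := by
  ext i j
  have hterm (k : Z) : fourierMatrix ψ i k * fourierMatrix ψ⁻¹ k j = ψ (k * (i - j)) := by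
    rw [fourierMatrix_apply, fourierMatrix_apply, AddChar.inv_apply, ← AddChar.map_add_eq_mul]
    congr 1
    ring
  simp [Matrix.mul_apply, hterm, AddChar.sum_mulShift _ hψ, Matrix.one_apply, sub_eq_zero]

theorem det_fourierMatrix_mul_det_fourierMatrix_inv_ne_zero (hψ : ψ.IsPrimitive)
    (hcard : (Fintype.card Z : K) ≠ 0) :
    (fourierMatrix ψ).det * (fourierMatrix ψ⁻¹).det ≠ 0 := by
  rw [← Matrix.det_mul, fourierMatrix_mul_fourierMatrix_inv hψ, Matrix.det_smul, Matrix.det_one,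
    mul_one]
  exact pow_ne_zero _ hcard

theorem det_fromBlocks_circulant_hankel (hψ : ψ.IsPrimitive) (hcard : (Fintype.card Z : K) ≠ 0)
    (c h : Z → K) :
    (Matrix.fromBlocks (Matrix.circulant c)ᵀ (Matrix.of fun i j => h (i + j))
      (Matrix.of fun i j => h (i + j)) (Matrix.circulant c)ᵀ).det =
      ∏ k, ((c ᵥ* fourierMatrix ψ) k * (c ᵥ* fourierMatrix ψ⁻¹) k -
        (h ᵥ* fourierMatrix ψ) k * (h ᵥ* fourierMatrix ψ⁻¹) k) := by
  have hconj : Matrix.fromBlocks (Matrix.circulant c)ᵀ (Matrix.of fun i j => h (i + j))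
        (Matrix.of fun i j => h (i + j)) (Matrix.circulant c)ᵀ *
        Matrix.fromBlocks (fourierMatrix ψ) 0 0 (fourierMatrix ψ⁻¹) =
      Matrix.fromBlocks (fourierMatrix ψ) 0 0 (fourierMatrix ψ⁻¹) * Matrix.fromBlocks
        (Matrix.diagonal (c ᵥ* fourierMatrix ψ)) (Matrix.diagonal (h ᵥ* fourierMatrix ψ⁻¹))
        (Matrix.diagonal (h ᵥ* fourierMatrix ψ)) (Matrix.diagonal (c ᵥ* fourierMatrix ψ⁻¹)) := by
    simp [Matrix.fromBlocks_multiply, transpose_circulant_mul_fourierMatrix,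
      hankel_mul_fourierMatrix]
  have hdet := congrArg Matrix.det hconj
  rw [Matrix.det_mul, Matrix.det_mul, Matrix.det_fromBlocks_zero₂₁, det_fromBlocks_diagonal,
    mul_comm] at hdet
  rw [mul_left_cancel₀ (det_fourierMatrix_mul_det_fourierMatrix_inv_ne_zero hψ hcard) hdet]
  exact Finset.prod_congr rfl fun k _ => by ring

end Fourier

section Dihedral

variable {n : ℕ}

theorem det_dihedralGroupMatrix [NeZero n] {K : Type*} [CommRing K] [IsDomain K]
    {ψ : AddChar (ZMod n) K} (hψ : ψ.IsPrimitive) (hn : (n : K) ≠ 0) (φ : DihedralGroup n → K) :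
    (Matrix.of fun x y => φ (x⁻¹ * y)).det =
      ∏ k, (((φ ∘ r) ᵥ* fourierMatrix ψ) k * ((φ ∘ r) ᵥ* fourierMatrix ψ⁻¹) k -
        ((φ ∘ sr) ᵥ* fourierMatrix ψ) k * ((φ ∘ sr) ᵥ* fourierMatrix ψ⁻¹) k) := by
  have hblocks : (Matrix.of fun x y => φ (x⁻¹ * y)).submatrix equivSum.symm equivSum.symm =
      Matrix.fromBlocks (Matrix.circulant (φ ∘ r))ᵀ (Matrix.of fun i j => (φ ∘ sr) (i + j))
        (Matrix.of fun i j => (φ ∘ sr) (i + j)) (Matrix.circulant (φ ∘ r))ᵀ := by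
    ext (i | i) (j | j) <;> simp [equivSum, sub_eq_add_neg, add_comm]
  rw [← Matrix.det_submatrix_equiv_self equivSum.symm, hblocks,
    det_fromBlocks_circulant_hankel hψ (by rwa [ZMod.card])]

/-- The set of the rotations `r (u i)` and the reflections `sr (v j)`. -/
def dihedralConnectionSet {ι κ : Type*} (u : ι → ZMod n) (v : κ → ZMod n) :
    Set (DihedralGroup n) :=
  Set.range (fun i => r (u i)) ∪ Set.range fun j => sr (v j)

variable {ι κ : Type*} {u : ι → ZMod n} {v : κ → ZMod n}

theorem r_mem_dihedralConnectionSet {k : ZMod n} :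
    r k ∈ dihedralConnectionSet u v ↔ k ∈ Set.range u := by
  simp [dihedralConnectionSet]

theorem sr_mem_dihedralConnectionSet {k : ZMod n} :
    sr k ∈ dihedralConnectionSet u v ↔ k ∈ Set.range v := by
  simp [dihedralConnectionSet]

theorem inv_mem_dihedralConnectionSet (hneg : ∀ i, ∃ i', u i' = -u i) :
    ∀ x ∈ dihedralConnectionSet u v, x⁻¹ ∈ dihedralConnectionSet u v := by
  rintro _ (⟨i, rfl⟩ | ⟨j, rfl⟩)
  · obtain ⟨i', hi'⟩ := hneg i
    exact Or.inl ⟨i', by simp [hi']⟩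
  · exact Or.inr ⟨j, by simp⟩

theorem one_notMem_dihedralConnectionSet (hzero : ∀ i, u i ≠ 0) :
    1 ∉ dihedralConnectionSet u v := by
  simpa [one_def, -r_zero, r_mem_dihedralConnectionSet] using hzero

theorem ncard_dihedralConnectionSet [Fintype ι] [Fintype κ] (hu : Function.Injective u)
    (hv : Function.Injective v) :
    (dihedralConnectionSet u v).ncard = Fintype.card ι + Fintype.card κ := by
  have hinj : Function.Injective (Sum.elim (fun i => r (u i)) fun j => sr (v j)) := by
    rintro (i | i) (j | j) <;> simp [hu.eq_iff, hv.eq_iff]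
  rw [dihedralConnectionSet, ← Set.Sum.elim_range, Set.ncard_range_of_injective hinj,
    Nat.card_eq_fintype_card, Fintype.card_sum]

variable {K : Type*} [CommRing K] [IsDomain K] {ψ : AddChar (ZMod n) K} [NeZero n] [Fintype κ]

theorem laplacianSymbol_sr_vecMul_fourierMatrix (hv : Function.Injective v) (hψ : ψ.IsPrimitive)
    (k : ZMod n) :
    ((laplacianSymbol K (dihedralConnectionSet u v) ∘ sr) ᵥ* fourierMatrix ψ) k =
      -∑ j, ψ (v j * k) + if k = 0 then (n : K) else 0 := by
  classical
  have hsymbol : laplacianSymbol K (dihedralConnectionSet u v) ∘ sr =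
      -(Set.range v).indicator 1 + 1 := by
    ext k
    simp [laplacianSymbol, one_def, -r_zero, Set.indicator_apply, sr_mem_dihedralConnectionSet]
  rw [hsymbol, Matrix.add_vecMul, Matrix.neg_vecMul, indicator_range_vecMul hv,
    one_vecMul_fourierMatrix hψ]
  simp [fourierMatrix_apply, Pi.single_apply]

variable [Fintype ι]

theorem laplacianSymbol_r_vecMul_fourierMatrix (hu : Function.Injective u)
    (hv : Function.Injective v) (hψ : ψ.IsPrimitive) (k : ZMod n) :
    ((laplacianSymbol K (dihedralConnectionSet u v) ∘ r) ᵥ* fourierMatrix ψ) k =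
      (Fintype.card ι + Fintype.card κ) - ∑ i, ψ (u i * k) + if k = 0 then (n : K) else 0 := by
  classical
  have hsymbol : laplacianSymbol K (dihedralConnectionSet u v) ∘ r =
      Pi.single 0 (Fintype.card ι + Fintype.card κ : K) - (Set.range u).indicator 1 + 1 := by
    ext k
    simp [laplacianSymbol, ncard_dihedralConnectionSet hu hv, one_def, -r_zero,
      Pi.single_apply, Set.indicator_apply, r_mem_dihedralConnectionSet]
  rw [hsymbol, Matrix.add_vecMul, Matrix.sub_vecMul, indicator_range_vecMul hu,
    one_vecMul_fourierMatrix hψ]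
  simp [fourierMatrix_apply, Pi.single_apply]

theorem det_laplacianSymbol_dihedralConnectionSet (hn : (n : K) ≠ 0) (hu : Function.Injective u)
    (hv : Function.Injective v) (hψ : ψ.IsPrimitive) :
    (Matrix.of fun x y => laplacianSymbol K (dihedralConnectionSet u v) (x⁻¹ * y)).det =
      4 * n * Fintype.card κ * ∏ k ∈ Finset.univ.erase 0,
        ((Fintype.card ι + Fintype.card κ - ∑ i, ψ (u i * k)) *
            (Fintype.card ι + Fintype.card κ - ∑ i, ψ⁻¹ (u i * k)) -
          (∑ j, ψ (v j * k)) * ∑ j, ψ⁻¹ (v j * k)) := by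
  simp only [det_dihedralGroupMatrix hψ hn, laplacianSymbol_r_vecMul_fourierMatrix hu hv hψ,
    laplacianSymbol_r_vecMul_fourierMatrix hu hv (isPrimitive_inv hψ),
    laplacianSymbol_sr_vecMul_fourierMatrix hv hψ,
    laplacianSymbol_sr_vecMul_fourierMatrix hv (isPrimitive_inv hψ)]
  rw [← Finset.mul_prod_erase _ _ (Finset.mem_univ 0)]
  congr 1
  · simp only [mul_zero, AddChar.map_zero_eq_one, Finset.sum_const, Finset.card_univ, nsmul_one,
      add_sub_cancel_left, if_true]
    ring
  · refine Finset.prod_congr rfl fun k hk => ?_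
    simp only [Finset.ne_of_mem_erase hk, if_false, add_zero, neg_mul_neg]

theorem numSpanningTrees_cayleyGraph_dihedralConnectionSet {K : Type*} [Field K] [CharZero K]
    {ψ : AddChar (ZMod n) K} (hu : Function.Injective u) (hv : Function.Injective v)
    (hneg : ∀ i, ∃ i', u i' = -u i) (hzero : ∀ i, u i ≠ 0) (hψ : ψ.IsPrimitive) :
    (numSpanningTrees (cayleyGraph (dihedralConnectionSet u v)) : K) =
      Fintype.card κ / n * ∏ k ∈ Finset.univ.erase 0,
        ((Fintype.card ι + Fintype.card κ - ∑ i, ψ (u i * k)) *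
            (Fintype.card ι + Fintype.card κ - ∑ i, ψ⁻¹ (u i * k)) -
          (∑ j, ψ (v j * k)) * ∑ j, ψ⁻¹ (v j * k)) := by
  have hn : (n : K) ≠ 0 := NeZero.ne _
  have hdet := det_laplacianSymbol (R := K) (inv_mem_dihedralConnectionSet (v := v) hneg)
    (one_notMem_dihedralConnectionSet hzero)
  rw [det_laplacianSymbol_dihedralConnectionSet hn hu hv hψ, DihedralGroup.card, Nat.cast_mul,
    Nat.cast_two] at hdet
  refine mul_left_cancel₀ (pow_ne_zero 2 (mul_ne_zero two_ne_zero hn)) (hdet.symm.trans ?_)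
  field_simp
  ring

end Dihedral

section Exponents

variable {n : ℕ}

theorem prod_erase_zero_zmod [NeZero n] {M : Type*} [CommMonoid M] (g : ZMod n → M) :
    ∏ k ∈ Finset.univ.erase 0, g k = ∏ j ∈ Finset.Ico 1 n, g j := by
  refine Finset.prod_nbij' ZMod.val (fun j => (j : ZMod n)) (fun k hk => ?_) (fun j hj => ?_)
    (fun k _ => ZMod.natCast_zmod_val k) (fun j hj => ZMod.val_cast_of_lt (Finset.mem_Ico.1 hj).2)
    fun k _ => by rw [ZMod.natCast_zmod_val]
  · exact Finset.mem_Ico.2 ⟨ZMod.val_pos.2 (Finset.ne_of_mem_erase hk), k.val_lt⟩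
  · obtain ⟨hpos, hlt⟩ := Finset.mem_Ico.1 hj
    refine Finset.mem_erase.2 ⟨fun h => ?_, Finset.mem_univ _⟩
    exact Nat.not_dvd_of_pos_of_lt hpos hlt ((ZMod.natCast_eq_zero_iff _ _).1 h)

theorem injective_natCast_zmod_of_lt {ι : Type*} {a : ι → ℕ} (ha : Function.Injective a)
    (hlt : ∀ i, a i < n) : Function.Injective fun i => (a i : ZMod n) := by
  intro i j hij
  have h := (ZMod.natCast_eq_natCast_iff _ _ _).1 hij
  exact ha (h.eq_of_lt_of_lt (hlt i) (hlt j))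

/-- The exponents `β_1, …, β_s, -β_1, …, -β_s` of the rotations in `dihedralGenSet`. -/
def signedExponents (n : ℕ) {s : ℕ} (β : Fin s → ℕ) : Fin s ⊕ Fin s → ZMod n :=
  Sum.elim (fun i => β i) fun i => -(β i : ZMod n)

variable {s t : ℕ} {β : Fin s → ℕ} {γ : Fin t → ℕ}

theorem dihedralGenSet_eq_dihedralConnectionSet (β : Fin s → ℕ) (γ : Fin t → ℕ) :
    dihedralGenSet n β γ =
      dihedralConnectionSet (signedExponents n β) fun j => (γ j : ZMod n) := by
  ext (k | k) <;> simp [dihedralGenSet, dihedralConnectionSet, signedExponents]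

theorem signedExponents_ne_zero (hβpos : ∀ i, 0 < β i) (hβlt : ∀ i, 2 * β i < n)
    (i : Fin s ⊕ Fin s) : signedExponents n β i ≠ 0 := by
  have hne (i) : (β i : ZMod n) ≠ 0 := by
    rw [Ne, ZMod.natCast_eq_zero_iff]
    exact Nat.not_dvd_of_pos_of_lt (hβpos i) (by have := hβlt i; omega)
  rcases i with i | i
  · exact hne i
  · exact neg_ne_zero.2 (hne i)

theorem exists_signedExponents_eq_neg (i : Fin s ⊕ Fin s) :
    ∃ i', signedExponents n β i' = -signedExponents n β i :=
  ⟨i.swap, by rcases i with i | i <;> simp [signedExponents]⟩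

theorem signedExponents_injective (hβ : Function.Injective β) (hβpos : ∀ i, 0 < β i)
    (hβlt : ∀ i, 2 * β i < n) : Function.Injective (signedExponents n β) := by
  have hcast : Function.Injective fun i => (β i : ZMod n) :=
    injective_natCast_zmod_of_lt hβ fun i => by have := hβlt i; omega
  refine hcast.sumElim (neg_injective.comp hcast) fun i j hij => ?_
  have hsum : ((β i + β j : ℕ) : ZMod n) = 0 := by
    push_cast
    exact eq_neg_iff_add_eq_zero.1 hij
  have hdvd := (ZMod.natCast_eq_zero_iff _ _).1 hsum
  have hpos := hβpos i
  have hi := hβlt i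
  have hj := hβlt j
  exact Nat.not_dvd_of_pos_of_lt (by omega) (by omega) hdvd

theorem sum_addChar_natCast_mul {K : Type*} [Field K] (ψ : AddChar (ZMod n) K) (γ : Fin t → ℕ)
    (k : ZMod n) : ∑ j, ψ (γ j * k) = ∑ j, ψ k ^ (γ j : ℤ) := by
  simp only [← nsmul_eq_mul, AddChar.map_nsmul_eq_pow, zpow_natCast]

theorem sum_addChar_signedExponents_mul {K : Type*} [Field K] (ψ : AddChar (ZMod n) K)
    (β : Fin s → ℕ) (k : ZMod n) :
    ∑ i, ψ (signedExponents n β i * k) = ∑ i, (ψ k ^ (β i : ℤ) + ψ k ^ (-(β i : ℤ))) := by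
  simp only [signedExponents, Fintype.sum_sum_type, Sum.elim_inl, Sum.elim_inr, neg_mul,
    AddChar.map_neg_eq_inv, ← nsmul_eq_mul, AddChar.map_nsmul_eq_pow, Finset.sum_add_distrib,
    zpow_neg, zpow_natCast]

theorem neZero_of_cayleyGraph_dihedralGenSet_connected (hβlt : ∀ i, 2 * β i < n)
    (hγle : ∀ j, γ j ≤ n - 1) (hconn : (cayleyGraph (dihedralGenSet n β γ)).Connected) :
    NeZero n := by
  refine ⟨?_⟩
  rintro rfl
  have hsub : dihedralGenSet 0 β γ ⊆ {sr 0} := by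
    rintro _ ((⟨i, rfl⟩ | ⟨i, rfl⟩) | ⟨j, rfl⟩)
    · exact absurd (hβlt i) (Nat.not_lt_zero _)
    · exact absurd (hβlt i) (Nat.not_lt_zero _)
    · simp [Nat.le_zero.1 (hγle j)]
  refine DihedralGroup.not_isCyclic zero_ne_one ((isCyclic_iff_exists_zpowers_eq_top).2 ⟨sr 0, ?_⟩)
  rw [Subgroup.zpowers_eq_closure, eq_top_iff, ← closure_eq_top_of_cayleyGraph_connected hconn]
  exact Subgroup.closure_mono hsub

end Exponents

theorem stmt12_general {K : Type*} [Field K] [CharZero K] (n s t : ℕ) [NeZero n] (β : Fin s → ℕ)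
    (γ : Fin t → ℕ) (hβpos : ∀ i, 0 < β i) (hβ : Function.Injective β) (hβlt : ∀ i, 2 * β i < n)
    (hγ : Function.Injective γ) (hγlt : ∀ j, γ j < n) (A B P : K → K)
    (hA : ∀ z : K, z ≠ 0 → A z = (2 * s + t : K) - ∑ i, (z ^ (β i : ℤ) + z ^ (-(β i : ℤ))))
    (hB : ∀ z : K, z ≠ 0 → B z = -∑ i, z ^ (γ i : ℤ))
    (hP : ∀ z : K, z ≠ 0 → P z = A z * A z⁻¹ - B z * B z⁻¹)
    (ε : K) (hε : IsPrimitiveRoot ε n) :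
    (numSpanningTrees (cayleyGraph (dihedralGenSet n β γ)) : K) =
      (t / n : K) * ∏ j ∈ Finset.Ico 1 n, P (ε ^ j) := by
  rw [dihedralGenSet_eq_dihedralConnectionSet, numSpanningTrees_cayleyGraph_dihedralConnectionSet
    (signedExponents_injective hβ hβpos hβlt) (injective_natCast_zmod_of_lt hγ hγlt)
    exists_signedExponents_eq_neg (signedExponents_ne_zero hβpos hβlt)
    (AddChar.zmodChar_primitive_of_primitive_root n hε), prod_erase_zero_zmod, Fintype.card_fin]
  congr 1
  refine Finset.prod_congr rfl fun j _ => ?_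
  have hz : ε ^ j ≠ 0 := pow_ne_zero j (hε.ne_zero (NeZero.ne n))
  rw [hP _ hz, hA _ hz, hA _ (inv_ne_zero hz), hB _ hz, hB _ (inv_ne_zero hz), neg_mul_neg]
  simp only [sum_addChar_signedExponents_mul, sum_addChar_natCast_mul]
  simp only [AddChar.inv_apply', AddChar.zmodChar_apply', Fintype.card_sum, Fintype.card_fin,
    Nat.cast_add, two_mul]

theorem stmt12 (n s t : ℕ) (β : Fin s → ℕ) (γ : Fin t → ℕ)
    (hβpos : ∀ i, 0 < β i) (hβmono : StrictMono β) (hβlt : ∀ i, 2 * β i < n)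
    (hγmono : StrictMono γ) (hγle : ∀ j, γ j ≤ n - 1) (ht : 0 < t)
    (hconn : (cayleyGraph (dihedralGenSet n β γ)).Connected)
    (A B P : ℂ → ℂ)
    (hA : ∀ z : ℂ, z ≠ 0 → A z = (2 * s + t : ℂ) - ∑ i, (z ^ (β i : ℤ) + z ^ (-(β i : ℤ))))
    (hB : ∀ z : ℂ, z ≠ 0 → B z = -∑ i, z ^ (γ i : ℤ))
    (hP : ∀ z : ℂ, z ≠ 0 → P z = A z * A z⁻¹ - B z * B z⁻¹)
    (ε : ℂ) (hε : ε = Complex.exp (2 * Real.pi * Complex.I / n)) :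
    (numSpanningTrees (cayleyGraph (dihedralGenSet n β γ)) : ℂ) =
      (t / n : ℂ) * ∏ j ∈ Finset.Ico 1 n, P (ε ^ j) := by
  have hn : NeZero n := neZero_of_cayleyGraph_dihedralGenSet_connected hβlt hγle hconn
  exact stmt12_general n s t β γ hβpos hβmono.injective hβlt hγmono.injective
    (fun j => Nat.lt_of_le_pred (NeZero.pos n) (hγle j)) A B P hA hB hP ε
    (hε ▸ Complex.isPrimitiveRoot_exp n hn.ne)
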